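/- Let Q(x) = Σ_I a_I x^I be a polynomial on ℝⁿ, q(x) = Q(x)e^{-‖x‖²/2}, and for c, η > 0 let q^c_η = F⁻¹( χ̃_c(η ξ) F(q) ) where χ̃_c : ℝⁿ → [0,1] is smooth, supported in B(0,c), and equal to 1 on B(0,c/2). Then ‖q^c_η − q‖_{L^∞(ℝⁿ)} ≤ √(⌊n/2+1⌋) · (c/(2η))^{(n−2)/2} · e^{−(1/4)(c/(2η))²} · Σ_I |a_I| √(I!). -/

import Mathlib

open scoped RealInnerProductSpace

noncomputable section

/-- The Fourier transform with the convention `F(f)(ξ) = ∫ e^{-i⟨x,ξ⟩} f(x) dx`. -/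
def Fn {n : ℕ} (f : EuclideanSpace ℝ (Fin n) → ℂ) (ξ : EuclideanSpace ℝ (Fin n)) : ℂ :=
  ∫ x : EuclideanSpace ℝ (Fin n), Complex.exp (-Complex.I * (⟪x, ξ⟫ : ℝ)) * f x

/-!
Since `m = χ̃_c(η ·)` equals `1` on the ball of radius `R = c / (2η)` and `|m - 1| ≤ 1` everywhere,
Fourier inversion bounds the error by `(2π)⁻ⁿ ∫_{‖ξ‖ ≥ R} |F q|`. Up to a unimodular factor and
`(2π)^{n/2}`, the transform of `x^I e^{-‖x‖²/2}` is the Hermite function `He_I(ξ) e^{-‖ξ‖²/2}`, so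
the Cauchy–Schwarz inequality with weight `e^{-‖ξ‖²/2}` splits the integral into the full norm of
`He_I`, equal to `√(I!)` times the root of the total Gaussian mass, and the root of the Gaussian
mass of `‖ξ‖ ≥ R`. In polar coordinates the latter, relative to the total mass, obeys a two-step
recursion in the dimension `d`, each step of which adds at most `R^{d-2} e^{-R²/2}`; this produces
the factor `⌊n/2 + 1⌋`.
-/

section

open MeasureTheory Metric Polynomial Set
open scoped FourierTransform Nat Real

/-! ### Integral inequalities -/

lemma integral_abs_mul_le_sqrt_mul_sqrt {α : Type*} [MeasurableSpace α] {μ : Measure α}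
    {f w : α → ℝ} (hw : ∀ x, 0 ≤ w x) (hf : AEStronglyMeasurable f μ) (hw_int : Integrable w μ)
    (hfw_int : Integrable (fun x => f x ^ 2 * w x) μ) :
    ∫ x, |f x| * w x ∂μ ≤ √(∫ x, f x ^ 2 * w x ∂μ) * √(∫ x, w x ∂μ) := by
  have h_sqrt : AEStronglyMeasurable (fun x => √(w x)) μ :=
    Real.continuous_sqrt.comp_aestronglyMeasurable hw_int.1
  have h_abs_sq (x : α) : (|f x| * √(w x)) ^ 2 = f x ^ 2 * w x := by
    rw [mul_pow, sq_abs, Real.sq_sqrt (hw x)]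
  have h_sqrt_sq (x : α) : √(w x) ^ 2 = w x := Real.sq_sqrt (hw x)
  have h_mul (x : α) : |f x| * √(w x) * √(w x) = |f x| * w x := by
    rw [mul_assoc, Real.mul_self_sqrt (hw x)]
  have h_memLp_abs : MemLp (fun x => |f x| * √(w x)) 2 μ :=
    (memLp_two_iff_integrable_sq (hf.norm.mul h_sqrt)).2
      (hfw_int.congr (.of_forall fun x => (h_abs_sq x).symm))
  have h_memLp_sqrt : MemLp (fun x => √(w x)) 2 μ :=
    (memLp_two_iff_integrable_sq h_sqrt).2 (hw_int.congr (.of_forall fun x => (h_sqrt_sq x).symm))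
  rw [← ENNReal.ofReal_ofNat] at h_memLp_abs h_memLp_sqrt
  have h := integral_mul_le_Lp_mul_Lq_of_nonneg Real.HolderConjugate.two_two
    (.of_forall fun x => by positivity) (.of_forall fun x => by positivity)
    h_memLp_abs h_memLp_sqrt
  simpa only [Real.rpow_two, h_abs_sq, h_sqrt_sq, h_mul, ← Real.sqrt_eq_rpow] using h

lemma integral_norm_sum_const_mul_le {α β 𝕜 : Type*} [MeasurableSpace α] [NormedField 𝕜]
    {μ : Measure α} (S : Finset β) (a : β → 𝕜) {f : β → α → 𝕜}
    (hf : ∀ i ∈ S, Integrable (f i) μ) :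
    ∫ x, ‖∑ i ∈ S, a i * f i x‖ ∂μ ≤ ∑ i ∈ S, ‖a i‖ * ∫ x, ‖f i x‖ ∂μ := by
  have h_int (i : β) (hi : i ∈ S) : Integrable (fun x => ‖a i‖ * ‖f i x‖) μ :=
    (hf i hi).norm.const_mul _
  simp only [← integral_const_mul]
  rw [← integral_finsetSum S h_int]
  refine integral_mono_of_nonneg (.of_forall fun x => norm_nonneg _)
    (integrable_finsetSum S h_int) (.of_forall fun x => ?_)
  exact (norm_sum_le _ _).trans_eq (by simp only [norm_mul])

/-! ### The Gaussian weight -/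

/-- The unnormalised standard Gaussian density `e^{-‖x‖²/2}`. -/
def gaussianWeight {E : Type*} [Norm E] (x : E) : ℝ :=
  Real.exp (-‖x‖ ^ 2 / 2)

lemma gaussianWeight_pos {E : Type*} [Norm E] (x : E) : 0 < gaussianWeight x :=
  Real.exp_pos _

lemma gaussianWeight_norm {E : Type*} [SeminormedAddCommGroup E] (x : E) :
    gaussianWeight ‖x‖ = gaussianWeight x := by
  rw [gaussianWeight, gaussianWeight, norm_norm]

@[fun_prop]
lemma continuous_gaussianWeight {E : Type*} [SeminormedAddCommGroup E] :
    Continuous (gaussianWeight : E → ℝ) := by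
  unfold gaussianWeight
  fun_prop

lemma gaussianWeight_real (x : ℝ) : gaussianWeight x = Real.exp (-(1 / 2) * x ^ 2) := by
  rw [gaussianWeight, Real.norm_eq_abs, sq_abs]
  ring_nf

lemma hasDerivAt_gaussianWeight (x : ℝ) :
    HasDerivAt gaussianWeight (-x * gaussianWeight x) x := by
  have h : HasDerivAt (fun y : ℝ => -(1 / 2) * y ^ 2) (-x) x := by
    convert! (hasDerivAt_pow 2 x).const_mul (-(1 / 2) : ℝ) using 1
    ring
  rw [funext gaussianWeight_real, mul_comm]
  exact h.exp

lemma integrable_eval_mul_gaussianWeight (p : ℝ[X]) :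
    Integrable fun x : ℝ => p.eval x * gaussianWeight x := by
  induction p using Polynomial.induction_on' with
  | add p q hp hq => simpa only [eval_add, add_mul] using! hp.add hq
  | monomial k a =>
    have h := integrable_rpow_mul_exp_neg_mul_sq (b := 1 / 2) (by norm_num) (s := k)
      (neg_one_lt_zero.trans_le k.cast_nonneg)
    simpa only [eval_monomial, gaussianWeight_real, Real.rpow_natCast, mul_assoc]
      using! h.const_mul a

lemma integrable_pow_mul_gaussianWeight (k : ℕ) :
    Integrable fun x : ℝ => x ^ k * gaussianWeight x := by
  simpa only [eval_pow, eval_X] using integrable_eval_mul_gaussianWeight (X ^ k)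

lemma integral_gaussianWeight_real : ∫ x : ℝ, gaussianWeight x = √(2 * π) := by
  simp_rw [gaussianWeight_real, integral_gaussian]
  congr 1
  ring

/-! ### Hermite polynomials -/

lemma hasDerivAt_hermite_mul_gaussianWeight (k : ℕ) (x : ℝ) :
    HasDerivAt (fun y : ℝ => aeval y (hermite k) * gaussianWeight y)
      (-(aeval x (hermite (k + 1)) * gaussianWeight x)) x := by
  convert! ((hermite k).hasDerivAt_aeval x).mul (hasDerivAt_gaussianWeight x) using 1
  simp only [hermite_succ, map_sub, map_mul, aeval_X]
  ring

lemma integrable_hermite_mul_eval_mul_gaussianWeight (k : ℕ) (p : ℝ[X]) :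
    Integrable fun x : ℝ => aeval x (hermite k) * gaussianWeight x * p.eval x := by
  convert! integrable_eval_mul_gaussianWeight ((hermite k).map (algebraMap ℤ ℝ) * p) using 2
  rw [eval_mul, eval_map_algebraMap]
  ring

lemma integral_hermite_succ_mul_eval_mul_gaussianWeight (k : ℕ) (p : ℝ[X]) :
    ∫ x : ℝ, aeval x (hermite (k + 1)) * gaussianWeight x * p.eval x =
      ∫ x : ℝ, aeval x (hermite k) * gaussianWeight x * (derivative p).eval x := by
  have h_succ := integrable_hermite_mul_eval_mul_gaussianWeight (k + 1) p
  have h_deriv := integrable_hermite_mul_eval_mul_gaussianWeight k (derivative p)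
  have h := integral_mul_deriv_eq_deriv_mul_of_integrable
    (fun x _ => hasDerivAt_hermite_mul_gaussianWeight k x) (fun x _ => p.hasDerivAt x)
    h_deriv (h_succ.neg.congr <| .of_forall fun x => by
      simp only [Pi.neg_apply, Pi.mul_apply, neg_mul])
    (integrable_hermite_mul_eval_mul_gaussianWeight k p)
  simpa only [neg_mul, integral_neg, neg_neg] using h.symm

lemma integral_hermite_mul_eval_mul_gaussianWeight (k : ℕ) (p : ℝ[X]) :
    ∫ x : ℝ, aeval x (hermite k) * gaussianWeight x * p.eval x =
      ∫ x : ℝ, gaussianWeight x * (derivative^[k] p).eval x := by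
  induction k generalizing p with
  | zero => simp
  | succ k ih =>
    rw [integral_hermite_succ_mul_eval_mul_gaussianWeight, ih, Function.iterate_succ_apply]

lemma iterate_derivative_of_monic {A : Type*} [Semiring A] {p : A[X]} {k : ℕ} (hp : p.Monic)
    (hk : p.natDegree = k) : derivative^[k] p = C (k ! : A) := by
  subst hk
  rw [eq_C_of_natDegree_le_zero
      ((natDegree_iterate_derivative p p.natDegree).trans_eq (Nat.sub_self _)),
    coeff_iterate_derivative, zero_add, Nat.descFactorial_self, hp.coeff_natDegree, nsmul_one]

lemma integral_hermite_sq_mul_gaussianWeight (k : ℕ) :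
    ∫ x : ℝ, aeval x (hermite k) ^ 2 * gaussianWeight x = k ! * √(2 * π) := by
  set p : ℝ[X] := (hermite k).map (algebraMap ℤ ℝ)
  have hp : p.Monic := (hermite_monic k).map _
  have hp_deg : p.natDegree = k := by rw [(hermite_monic k).natDegree_map, natDegree_hermite]
  calc ∫ x : ℝ, aeval x (hermite k) ^ 2 * gaussianWeight x
      = ∫ x : ℝ, aeval x (hermite k) * gaussianWeight x * p.eval x := by
        congr with x
        rw [eval_map_algebraMap]
        ring
    _ = ∫ x : ℝ, gaussianWeight x * (k ! : ℝ) := by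
        rw [integral_hermite_mul_eval_mul_gaussianWeight, iterate_derivative_of_monic hp hp_deg]
        simp only [eval_C]
    _ = k ! * √(2 * π) := by
        rw [integral_mul_const, integral_gaussianWeight_real, mul_comm]

/-! ### Fourier transforms -/

lemma integral_cexp_inner_mul_eq_fourier {V : Type*} [NormedAddCommGroup V]
    [InnerProductSpace ℝ V] [MeasurableSpace V] [BorelSpace V] [FiniteDimensional ℝ V]
    (f : V → ℂ) (ξ : V) :
    ∫ x : V, Complex.exp (-Complex.I * (⟪x, ξ⟫ : ℝ)) * f x = 𝓕 f ((2 * π)⁻¹ • ξ) := by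
  rw [Real.fourier_eq']
  refine integral_congr_ae (.of_forall fun x => ?_)
  simp only [real_inner_smul_right, smul_eq_mul]
  congr 2
  push_cast
  field_simp

lemma fourier_smul_eq_of_hasDerivAt {E : Type*} [NormedAddCommGroup E] [NormedSpace ℂ E]
    {f : ℝ → E} {d : E} {w : ℝ} (hf : Integrable f) (hf' : Integrable fun x => x • f x)
    (hd : HasDerivAt (𝓕 f) d w) :
    𝓕 (fun x => x • f x) w = (Complex.I / (2 * π)) • d := by
  have h_deriv : d = (-2 * π * Complex.I) • 𝓕 (fun x => x • f x) w := by
    rw [hd.unique (Real.hasDerivAt_fourier hf hf' w), Real.fourier_real_eq_integral_exp_smul,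
      Real.fourier_real_eq_integral_exp_smul, ← integral_smul]
    simp only [mul_smul, Complex.coe_smul, smul_comm (Complex.exp _)]
  rw [h_deriv, smul_smul]
  have : Complex.I / (2 * π) * (-2 * π * Complex.I) = 1 := by
    field_simp
    simp
  rw [this, one_smul]

lemma fourier_gaussianWeight (w : ℝ) :
    𝓕 (fun x : ℝ => (gaussianWeight x : ℂ)) w = √(2 * π) * gaussianWeight (2 * π * w) := by
  have h_const : ((π : ℂ) / (1 / 2)) ^ (1 / 2 : ℂ) = (√(2 * π) : ℝ) := by
    rw [Real.sqrt_eq_rpow, Complex.ofReal_cpow (by positivity)]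
    push_cast
    congr 1
    ring
  have h := fourier_gaussian_innerProductSpace (b := 1 / 2) (by norm_num) w
  rw [Module.finrank_self, Nat.cast_one, h_const] at h
  convert! h using 3
  · simp only [gaussianWeight_real, ← Complex.ofReal_pow, Real.norm_eq_abs, sq_abs]
    push_cast
    rfl
  · simp only [gaussianWeight_real, ← Complex.ofReal_pow, Real.norm_eq_abs, sq_abs]
    push_cast
    ring_nf

/- Multiplication by `x` becomes `i/2π` times the derivative, which raises the index of a Hermite
function. -/
lemma fourier_pow_mul_gaussianWeight (k : ℕ) (w : ℝ) :
    𝓕 (fun x : ℝ => ((x ^ k * gaussianWeight x : ℝ) : ℂ)) w =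
      (-Complex.I) ^ k * √(2 * π) *
        ((aeval (2 * π * w) (hermite k) * gaussianWeight (2 * π * w) : ℝ) : ℂ) := by
  induction k generalizing w with
  | zero => simpa using fourier_gaussianWeight w
  | succ k ih =>
    have h_smul (x : ℝ) : ((x ^ (k + 1) * gaussianWeight x : ℝ) : ℂ) =
        x • ((x ^ k * gaussianWeight x : ℝ) : ℂ) := by
      rw [pow_succ', mul_assoc, Complex.ofReal_mul, Complex.real_smul]
    have h_deriv := (((hasDerivAt_hermite_mul_gaussianWeight k (2 * π * w)).scomp w
      (hasDerivAt_const_mul (2 * π))).ofReal_comp).const_mul ((-Complex.I) ^ k * (√(2 * π) : ℂ))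
    have h_int := (integrable_pow_mul_gaussianWeight (k + 1)).ofReal (𝕜 := ℂ)
    simp only [Complex.coe_algebraMap, h_smul] at h_int ⊢
    rw [fourier_smul_eq_of_hasDerivAt (integrable_pow_mul_gaussianWeight k).ofReal h_int
      (by rw [funext ih]; exact h_deriv), pow_succ]
    simp only [smul_eq_mul]
    push_cast
    field_simp

lemma integral_cexp_mul_pow_mul_gaussianWeight (k : ℕ) (ξ : ℝ) :
    ∫ x : ℝ, Complex.exp (-Complex.I * (⟪x, ξ⟫ : ℝ)) * ((x ^ k * gaussianWeight x : ℝ) : ℂ) =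
      (-Complex.I) ^ k * √(2 * π) * ((aeval ξ (hermite k) * gaussianWeight ξ : ℝ) : ℂ) := by
  rw [integral_cexp_inner_mul_eq_fourier, fourier_pow_mul_gaussianWeight, smul_eq_mul,
    mul_inv_cancel_left₀ (by positivity)]

/-! ### Gaussian tails -/

/-- The moments `∫_R^∞ rᵐ e^{-r²/2} dr`, radial parts of Gaussian tails in dimension `m + 1`. -/
def gaussianTailMoment (m : ℕ) (R : ℝ) : ℝ :=
  ∫ r in Ioi R, r ^ m * gaussianWeight r

lemma gaussianTailMoment_one (R : ℝ) : gaussianTailMoment 1 R = gaussianWeight R := by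
  have h_deriv (x : ℝ) :
      HasDerivAt (fun y => -gaussianWeight y) (x ^ 1 * gaussianWeight x) x := by
    simpa only [pow_one, neg_mul, neg_neg] using! (hasDerivAt_gaussianWeight x).neg
  have h_int := (integrable_pow_mul_gaussianWeight 1).integrableOn (s := Ioi R)
  have h_lim := tendsto_zero_of_hasDerivAt_of_integrableOn_Ioi (fun x _ => h_deriv x) h_int
    (by simpa using! (integrable_pow_mul_gaussianWeight 0).neg.integrableOn (s := Ioi R))
  rw [gaussianTailMoment, integral_Ioi_of_hasDerivAt_of_tendsto' (fun x _ => h_deriv x) h_int h_lim,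
    zero_sub, neg_neg]

lemma gaussianTailMoment_add_two (m : ℕ) (R : ℝ) :
    gaussianTailMoment (m + 2) R =
      R ^ (m + 1) * gaussianWeight R + (m + 1) * gaussianTailMoment m R := by
  have h_deriv (x : ℝ) : HasDerivAt (fun y => y ^ (m + 1) * gaussianWeight y)
      ((m + 1) * (x ^ m * gaussianWeight x) - x ^ (m + 2) * gaussianWeight x) x := by
    convert! (hasDerivAt_pow (m + 1) x).mul (hasDerivAt_gaussianWeight x) using 1
    push_cast [Nat.add_sub_cancel]
    ring
  have h_low := ((integrable_pow_mul_gaussianWeight m).const_mul ((m : ℝ) + 1)).integrableOn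
    (s := Ioi R)
  have h_high := (integrable_pow_mul_gaussianWeight (m + 2)).integrableOn (s := Ioi R)
  have h := integral_Ioi_of_hasDerivAt_of_tendsto' (fun x _ => h_deriv x) (h_low.sub h_high)
    (tendsto_zero_of_hasDerivAt_of_integrableOn_Ioi (fun x _ => h_deriv x) (h_low.sub h_high)
      (integrable_pow_mul_gaussianWeight (m + 1)).integrableOn)
  rw [integral_sub h_low h_high, integral_const_mul] at h
  unfold gaussianTailMoment
  linarith

lemma gaussianTailMoment_add_two_zero (m : ℕ) :
    gaussianTailMoment (m + 2) 0 = (m + 1) * gaussianTailMoment m 0 := by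
  rw [gaussianTailMoment_add_two, zero_pow m.succ_ne_zero, zero_mul, zero_add]

lemma gaussianTailMoment_zero_zero : gaussianTailMoment 0 0 = √(π / 2) := by
  simp only [gaussianTailMoment, pow_zero, one_mul, gaussianWeight_real, integral_gaussian_Ioi]
  rw [show π / (1 / 2) = 2 ^ 2 * (π / 2) by ring, Real.sqrt_mul (by norm_num),
    Real.sqrt_sq (by norm_num), mul_div_cancel_left₀ _ (by norm_num)]

lemma one_le_gaussianTailMoment_zero (m : ℕ) : 1 ≤ gaussianTailMoment m 0 := by
  induction m using Nat.twoStepInduction with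
  | zero =>
    rw [gaussianTailMoment_zero_zero, Real.one_le_sqrt]
    linarith [Real.pi_gt_three]
  | one => simp [gaussianTailMoment_one, gaussianWeight]
  | more m ih _ =>
    rw [gaussianTailMoment_add_two_zero]
    exact one_le_mul_of_one_le_of_one_le (by simp) ih

lemma gaussianTailMoment_zero_le_inv_mul {R : ℝ} (hR : 0 < R) :
    gaussianTailMoment 0 R ≤ R⁻¹ * gaussianWeight R := by
  rw [← gaussianTailMoment_one, gaussianTailMoment, gaussianTailMoment, ← integral_const_mul]
  refine setIntegral_mono_on (integrable_pow_mul_gaussianWeight 0).integrableOn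
    ((integrable_pow_mul_gaussianWeight 1).integrableOn.const_mul _) measurableSet_Ioi
    fun r hr => ?_
  have h_one_le : 1 ≤ R⁻¹ * r := by
    rw [inv_mul_eq_div, one_le_div hR]
    exact (mem_Ioi.1 hr).le
  rw [pow_zero, pow_one, ← mul_assoc]
  gcongr
  exact (gaussianWeight_pos r).le

/-- An upper bound, valid for `R ≥ 1`, for the proportion of the Gaussian mass of `ℝᵈ` lying outside
the ball of radius `R`. The power is real since its exponent is negative for `d = 1`. -/
def gaussianTailBound (d : ℕ) (R : ℝ) : ℝ :=
  ((d / 2 + 1 : ℕ) : ℝ) * R ^ ((d : ℝ) - 2) * gaussianWeight R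

lemma gaussianTailBound_add_two_ge {d : ℕ} {R : ℝ} (hR : 1 ≤ R) :
    R ^ d * gaussianWeight R + gaussianTailBound d R ≤ gaussianTailBound (d + 2) R := by
  have h_weight := (gaussianWeight_pos R).le
  have h_pow : R ^ (((d + 2 : ℕ) : ℝ) - 2) = R ^ d := by
    rw [← Real.rpow_natCast]
    push_cast
    ring_nf
  have h_div : (d + 2) / 2 + 1 = d / 2 + 1 + 1 := by lia
  calc R ^ d * gaussianWeight R + gaussianTailBound d R
      ≤ R ^ d * gaussianWeight R + ((d / 2 + 1 : ℕ) : ℝ) * R ^ d * gaussianWeight R := by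
        rw [gaussianTailBound, ← Real.rpow_natCast R d]
        gcongr
        linarith
    _ = gaussianTailBound (d + 2) R := by
        rw [gaussianTailBound, h_pow, h_div, Nat.cast_add_one (d / 2 + 1)]
        ring

lemma gaussianTailMoment_le_mul_gaussianTailMoment_zero (m : ℕ) {R : ℝ} (hR : 1 ≤ R) :
    gaussianTailMoment m R ≤ gaussianTailBound (m + 1) R * gaussianTailMoment m 0 := by
  have hR_pos : 0 < R := zero_lt_one.trans_le hR
  have h_weight := gaussianWeight_pos R
  induction m using Nat.twoStepInduction with
  | zero =>
    have h_bound : gaussianTailBound 1 R = R⁻¹ * gaussianWeight R := by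
      rw [gaussianTailBound, ← Real.rpow_neg_one]
      norm_num
    rw [zero_add, h_bound]
    exact (gaussianTailMoment_zero_le_inv_mul hR_pos).trans
      (le_mul_of_one_le_right (by positivity) (one_le_gaussianTailMoment_zero 0))
  | one =>
    have h_bound : gaussianTailBound 2 R = 2 * gaussianWeight R := by
      simp [gaussianTailBound]
    have h_zero : gaussianTailMoment 1 0 = 1 := by
      simp [gaussianTailMoment_one, gaussianWeight]
    rw [gaussianTailMoment_one, h_zero, h_bound]
    linarith
  | more m ih _ =>
    have h_one_le := one_le_gaussianTailMoment_zero (m + 2)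
    calc gaussianTailMoment (m + 2) R
        = R ^ (m + 1) * gaussianWeight R + (m + 1) * gaussianTailMoment m R :=
          gaussianTailMoment_add_two m R
      _ ≤ R ^ (m + 1) * gaussianWeight R * gaussianTailMoment (m + 2) 0 +
            (m + 1) * (gaussianTailBound (m + 1) R * gaussianTailMoment m 0) := by
          gcongr ?_ + (m + 1) * ?_
          exact le_mul_of_one_le_right (by positivity) h_one_le
      _ = (R ^ (m + 1) * gaussianWeight R + gaussianTailBound (m + 1) R) *
            gaussianTailMoment (m + 2) 0 := by
          rw [gaussianTailMoment_add_two_zero]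
          ring
      _ ≤ gaussianTailBound (m + 2 + 1) R * gaussianTailMoment (m + 2) 0 := by
          gcongr
          exact gaussianTailBound_add_two_ge hR

lemma sqrt_gaussianTailBound (d : ℕ) {R : ℝ} (hR : 0 ≤ R) :
    √(gaussianTailBound d R) =
      √((d / 2 + 1 : ℕ) : ℝ) * R ^ (((d : ℝ) - 2) / 2) * Real.exp (-(1 / 4) * R ^ 2) := by
  rw [gaussianTailBound, Real.sqrt_mul (by positivity), Real.sqrt_mul (by positivity),
    Real.sqrt_eq_rpow (R ^ _), ← Real.rpow_mul hR, gaussianWeight_real, ← Real.exp_half]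
  ring_nf

lemma setIntegral_compl_ball_fun_norm_addHaar {E F : Type*} [NormedAddCommGroup E]
    [NormedSpace ℝ E] [FiniteDimensional ℝ E] [Nontrivial E] [MeasurableSpace E] [BorelSpace E]
    [NormedAddCommGroup F] [NormedSpace ℝ F] (μ : Measure E) [μ.IsAddHaarMeasure] (f : ℝ → F)
    {R : ℝ} (hR : 0 ≤ R) :
    ∫ x in (ball (0 : E) R)ᶜ, f ‖x‖ ∂μ =
      Module.finrank ℝ E • μ.real (ball 0 1) •
        ∫ r in Ioi R, r ^ (Module.finrank ℝ E - 1) • f r := by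
  have h_ind (x : E) :
      (ball (0 : E) R)ᶜ.indicator (fun x => f ‖x‖) x = (Ici R).indicator f ‖x‖ := by
    simp [indicator]
  have h_smul (r : ℝ) : r ^ (Module.finrank ℝ E - 1) • (Ici R).indicator f r =
      (Ici R).indicator (fun r => r ^ (Module.finrank ℝ E - 1) • f r) r :=
    (indicator_const_smul_apply _ _ _ _).symm
  have h_set : (Ioi 0 ∩ Ici R : Set ℝ) =ᵐ[volume] Ioi R := by
    have h := (ae_eq_refl (Ioi (0 : ℝ))).inter (Ioi_ae_eq_Ici (μ := volume) (a := R)).symm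
    rwa [Ioi_inter_Ioi, sup_eq_right.2 hR] at h
  rw [← integral_indicator measurableSet_ball.compl]
  simp only [h_ind, integral_fun_norm_addHaar μ, h_smul]
  rw [setIntegral_indicator measurableSet_Ici, setIntegral_congr_set h_set]

lemma setIntegral_compl_ball_gaussianWeight_le {E : Type*} [NormedAddCommGroup E]
    [NormedSpace ℝ E] [FiniteDimensional ℝ E] [MeasurableSpace E] [BorelSpace E]
    (μ : Measure E) [μ.IsAddHaarMeasure] {R : ℝ} (hR : 1 ≤ R) :
    ∫ x in (ball (0 : E) R)ᶜ, gaussianWeight x ∂μ ≤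
      gaussianTailBound (Module.finrank ℝ E) R * ∫ x, gaussianWeight x ∂μ := by
  have hR_pos : 0 < R := zero_lt_one.trans_le hR
  rcases subsingleton_or_nontrivial E with hE | hE
  · rw [Subsingleton.eq_univ_of_nonempty ⟨0, mem_ball_self hR_pos⟩, compl_univ, setIntegral_empty]
    exact mul_nonneg (mul_nonneg (by positivity) (gaussianWeight_pos R).le)
      (integral_nonneg fun x => (gaussianWeight_pos x).le)
  obtain ⟨m, hm⟩ := Nat.exists_eq_add_one.2 (Module.finrank_pos (R := ℝ) (M := E))
  simp only [← gaussianWeight_norm (E := E)]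
  rw [setIntegral_compl_ball_fun_norm_addHaar μ gaussianWeight hR_pos.le,
    integral_fun_norm_addHaar μ gaussianWeight]
  simp only [hm, Nat.add_sub_cancel, nsmul_eq_mul, smul_eq_mul]
  calc ((m + 1 : ℕ) : ℝ) * (μ.real (ball 0 1) * gaussianTailMoment m R)
      ≤ ((m + 1 : ℕ) : ℝ) * (μ.real (ball 0 1) *
          (gaussianTailBound (m + 1) R * gaussianTailMoment m 0)) := by
        gcongr
        exact gaussianTailMoment_le_mul_gaussianTailMoment_zero m hR
    _ = gaussianTailBound (m + 1) R *
          (((m + 1 : ℕ) : ℝ) * (μ.real (ball 0 1) * gaussianTailMoment m 0)) := by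
        ring

/-! ### Gaussian monomials and Hermite functions on Euclidean space -/

section

variable {ι : Type*} [Fintype ι]

lemma integrable_prod_apply {𝕜 : Type*} [RCLike 𝕜] {f : ι → ℝ → 𝕜}
    (hf : ∀ j, Integrable (f j)) :
    Integrable fun x : EuclideanSpace ℝ ι => ∏ j, f j (x j) :=
  ((PiLp.volume_preserving_ofLp ι).integrable_comp_emb
    (MeasurableEquiv.toLp 2 (ι → ℝ)).symm.measurableEmbedding).2 (Integrable.fintype_prod hf)

lemma integral_prod_apply {𝕜 : Type*} [RCLike 𝕜] (f : ι → ℝ → 𝕜) :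
    ∫ x : EuclideanSpace ℝ ι, ∏ j, f j (x j) = ∏ j, ∫ t, f j t := by
  rw [← integral_fintype_prod_volume_eq_prod]
  exact (PiLp.volume_preserving_ofLp ι).integral_comp
    (MeasurableEquiv.toLp 2 (ι → ℝ)).symm.measurableEmbedding fun x => ∏ j, f j (x j)

lemma gaussianWeight_eq_prod (x : EuclideanSpace ℝ ι) :
    gaussianWeight x = ∏ j, gaussianWeight (x j) := by
  simp only [gaussianWeight, ← Real.exp_sum, EuclideanSpace.real_norm_sq_eq, Real.norm_eq_abs,
    sq_abs, ← Finset.sum_div, Finset.sum_neg_distrib]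

/-- The product `x^I e^{-‖x‖²/2}` of a monomial and the Gaussian weight. -/
def gaussianMonomial (I : ι → ℕ) (x : EuclideanSpace ℝ ι) : ℝ :=
  (∏ j, x j ^ I j) * gaussianWeight x

/-- The multivariate (probabilists') Hermite polynomial `He_I(x) = ∏ⱼ He_{Iⱼ}(xⱼ)`. -/
def multiHermite (I : ι → ℕ) (x : EuclideanSpace ℝ ι) : ℝ :=
  ∏ j, aeval (x j) (hermite (I j))

@[fun_prop]
lemma continuous_multiHermite (I : ι → ℕ) : Continuous (multiHermite I) := by
  unfold multiHermite
  fun_prop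

@[fun_prop]
lemma continuous_gaussianMonomial (I : ι → ℕ) : Continuous (gaussianMonomial I) := by
  unfold gaussianMonomial
  fun_prop

lemma gaussianMonomial_eq_prod (I : ι → ℕ) (x : EuclideanSpace ℝ ι) :
    gaussianMonomial I x = ∏ j, (x j ^ I j * gaussianWeight (x j)) := by
  rw [gaussianMonomial, gaussianWeight_eq_prod, Finset.prod_mul_distrib]

lemma multiHermite_mul_gaussianWeight_eq_prod (I : ι → ℕ) (x : EuclideanSpace ℝ ι) :
    multiHermite I x * gaussianWeight x =
      ∏ j, (aeval (x j) (hermite (I j)) * gaussianWeight (x j)) := by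
  rw [multiHermite, gaussianWeight_eq_prod, Finset.prod_mul_distrib]

lemma multiHermite_sq_mul_gaussianWeight_eq_prod (I : ι → ℕ) (x : EuclideanSpace ℝ ι) :
    multiHermite I x ^ 2 * gaussianWeight x =
      ∏ j, (aeval (x j) (hermite (I j)) ^ 2 * gaussianWeight (x j)) := by
  rw [multiHermite, gaussianWeight_eq_prod, Finset.prod_mul_distrib, Finset.prod_pow]

lemma integrable_gaussianMonomial (I : ι → ℕ) : Integrable (gaussianMonomial I) := by
  rw [funext (gaussianMonomial_eq_prod I)]
  exact integrable_prod_apply fun j => integrable_pow_mul_gaussianWeight (I j)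

lemma integrable_gaussianWeight :
    Integrable (gaussianWeight : EuclideanSpace ℝ ι → ℝ) := by
  refine (integrable_prod_apply (f := fun _ t => gaussianWeight t) fun _ => ?_).congr
    (.of_forall fun x => (gaussianWeight_eq_prod x).symm)
  simpa only [pow_zero, one_mul] using integrable_pow_mul_gaussianWeight 0

lemma integrable_multiHermite_mul_gaussianWeight (I : ι → ℕ) :
    Integrable fun x => multiHermite I x * gaussianWeight x := by
  simp only [multiHermite_mul_gaussianWeight_eq_prod]
  refine integrable_prod_apply (f := fun j t => aeval t (hermite (I j)) * gaussianWeight t)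
    fun j => ?_
  simpa only [eval_one, mul_one] using integrable_hermite_mul_eval_mul_gaussianWeight (I j) 1

lemma integrable_multiHermite_sq_mul_gaussianWeight (I : ι → ℕ) :
    Integrable fun x => multiHermite I x ^ 2 * gaussianWeight x := by
  simp only [multiHermite_sq_mul_gaussianWeight_eq_prod]
  refine integrable_prod_apply (f := fun j t => aeval t (hermite (I j)) ^ 2 * gaussianWeight t)
    fun j => ?_
  convert! integrable_eval_mul_gaussianWeight ((hermite (I j)).map (algebraMap ℤ ℝ) ^ 2) using 2
  rw [eval_pow, eval_map_algebraMap]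

variable (ι) in
lemma integral_gaussianWeight :
    ∫ x : EuclideanSpace ℝ ι, gaussianWeight x = √(2 * π) ^ Fintype.card ι := by
  simp only [gaussianWeight_eq_prod]
  rw [integral_prod_apply fun _ t => gaussianWeight t]
  simp only [integral_gaussianWeight_real, Finset.prod_const, Finset.card_univ]

lemma integral_multiHermite_sq_mul_gaussianWeight (I : ι → ℕ) :
    ∫ x, multiHermite I x ^ 2 * gaussianWeight x =
      (∏ j, ((I j)! : ℝ)) * √(2 * π) ^ Fintype.card ι := by
  simp only [multiHermite_sq_mul_gaussianWeight_eq_prod]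
  rw [integral_prod_apply fun j t => aeval t (hermite (I j)) ^ 2 * gaussianWeight t]
  simp only [integral_hermite_sq_mul_gaussianWeight, Finset.prod_mul_distrib, Finset.prod_const,
    Finset.card_univ]

lemma integral_cexp_inner_mul_prod (f : ι → ℝ → ℂ) (ξ : EuclideanSpace ℝ ι) :
    ∫ x : EuclideanSpace ℝ ι, Complex.exp (-Complex.I * (⟪x, ξ⟫ : ℝ)) * ∏ j, f j (x j) =
      ∏ j, ∫ t : ℝ, Complex.exp (-Complex.I * (⟪t, ξ j⟫ : ℝ)) * f j t := by
  rw [← integral_prod_apply]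
  congr with x
  rw [Finset.prod_mul_distrib, ← Complex.exp_sum, ← Finset.mul_sum, ← Complex.ofReal_sum,
    PiLp.inner_apply]

lemma integral_cexp_inner_mul_gaussianMonomial (I : ι → ℕ) (ξ : EuclideanSpace ℝ ι) :
    ∫ x, Complex.exp (-Complex.I * (⟪x, ξ⟫ : ℝ)) * (gaussianMonomial I x : ℂ) =
      (∏ j, (-Complex.I) ^ I j) * √(2 * π) ^ Fintype.card ι *
        ((multiHermite I ξ * gaussianWeight ξ : ℝ) : ℂ) := by
  simp only [gaussianMonomial_eq_prod, multiHermite_mul_gaussianWeight_eq_prod, Complex.ofReal_prod]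
  rw [integral_cexp_inner_mul_prod fun j t => ((t ^ I j * gaussianWeight t : ℝ) : ℂ)]
  simp only [integral_cexp_mul_pow_mul_gaussianWeight, Finset.prod_mul_distrib, Finset.prod_const,
    Finset.card_univ]

lemma setIntegral_compl_ball_abs_multiHermite_mul_gaussianWeight_le (I : ι → ℕ)
    {R : ℝ} (hR : 1 ≤ R) :
    ∫ x in (ball 0 R)ᶜ, |multiHermite I x| * gaussianWeight x ≤
      √(2 * π) ^ Fintype.card ι *
        (√(gaussianTailBound (Fintype.card ι) R) * √(∏ j, ((I j)! : ℝ))) := by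
  set W := √(2 * π) ^ Fintype.card ι
  have hW : 0 ≤ W := by positivity
  have h_sq : ∫ x in (ball 0 R)ᶜ, multiHermite I x ^ 2 * gaussianWeight x ≤
      (∏ j, ((I j)! : ℝ)) * W := by
    rw [← integral_multiHermite_sq_mul_gaussianWeight]
    exact setIntegral_le_integral (integrable_multiHermite_sq_mul_gaussianWeight I)
      (.of_forall fun x => mul_nonneg (sq_nonneg _) (gaussianWeight_pos x).le)
  have h_tail : ∫ x in (ball (0 : EuclideanSpace ℝ ι) R)ᶜ, gaussianWeight x ≤
      gaussianTailBound (Fintype.card ι) R * W := by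
    have h := setIntegral_compl_ball_gaussianWeight_le
      (volume : Measure (EuclideanSpace ℝ ι)) hR
    rwa [finrank_euclideanSpace, integral_gaussianWeight] at h
  calc ∫ x in (ball 0 R)ᶜ, |multiHermite I x| * gaussianWeight x
      ≤ √(∫ x in (ball 0 R)ᶜ, multiHermite I x ^ 2 * gaussianWeight x) *
          √(∫ x in (ball (0 : EuclideanSpace ℝ ι) R)ᶜ, gaussianWeight x) :=
        integral_abs_mul_le_sqrt_mul_sqrt (fun x => (gaussianWeight_pos x).le)
          (continuous_multiHermite I).aestronglyMeasurable integrable_gaussianWeight.integrableOn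
          (integrable_multiHermite_sq_mul_gaussianWeight I).integrableOn
    _ ≤ √((∏ j, ((I j)! : ℝ)) * W) * √(gaussianTailBound (Fintype.card ι) R * W) := by
        gcongr
    _ = √W * √W * (√(gaussianTailBound (Fintype.card ι) R) * √(∏ j, ((I j)! : ℝ))) := by
        rw [Real.sqrt_mul' _ hW, Real.sqrt_mul' _ hW]
        ring
    _ = W * (√(gaussianTailBound (Fintype.card ι) R) * √(∏ j, ((I j)! : ℝ))) := by
        rw [Real.mul_self_sqrt hW]

end

/-! ### Fourier multipliers -/

section

variable {n : ℕ}

lemma Fn_eq_fourier (f : EuclideanSpace ℝ (Fin n) → ℂ) (ξ : EuclideanSpace ℝ (Fin n)) :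
    Fn f ξ = 𝓕 f ((2 * π)⁻¹ • ξ) :=
  integral_cexp_inner_mul_eq_fourier f ξ

lemma Fn_sum_const_mul {β : Type*} (S : Finset β) (a : β → ℂ)
    {f : β → EuclideanSpace ℝ (Fin n) → ℂ} (hf : ∀ i ∈ S, Integrable (f i))
    (ξ : EuclideanSpace ℝ (Fin n)) :
    Fn (fun x => ∑ i ∈ S, a i * f i x) ξ = ∑ i ∈ S, a i * Fn (f i) ξ := by
  have h_int (i : β) (hi : i ∈ S) :
      Integrable fun x => Complex.exp (-Complex.I * (⟪x, ξ⟫ : ℝ)) * f i x :=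
    (hf i hi).bdd_mul (c := 1) (by fun_prop) (.of_forall fun x => by simp [Complex.norm_exp])
  simp only [Fn, Finset.mul_sum, mul_left_comm _ (a _)]
  rw [integral_finsetSum _ fun i hi => (h_int i hi).const_mul (a i)]
  simp only [integral_const_mul]

lemma norm_Fn_gaussianMonomial (I : Fin n → ℕ) (ξ : EuclideanSpace ℝ (Fin n)) :
    ‖Fn (fun x => gaussianMonomial I x) ξ‖ =
      √(2 * π) ^ n * (|multiHermite I ξ| * gaussianWeight ξ) := by
  have h_phase : ‖∏ j, (-Complex.I) ^ I j‖ = 1 := by simp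
  rw [Fn, integral_cexp_inner_mul_gaussianMonomial, Fintype.card_fin, norm_mul, norm_mul, h_phase,
    one_mul, norm_pow, Complex.norm_of_nonneg (Real.sqrt_nonneg _), Complex.norm_real, norm_mul,
    Real.norm_eq_abs, Real.norm_of_nonneg (gaussianWeight_pos ξ).le]

lemma integrable_Fn_gaussianMonomial (I : Fin n → ℕ) :
    Integrable (Fn fun x => gaussianMonomial I x) := by
  refine (((integrable_multiHermite_mul_gaussianWeight I).ofReal (𝕜 := ℂ)).const_mul _).congr
    (.of_forall fun ξ => (integral_cexp_inner_mul_gaussianMonomial I ξ).symm)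

lemma setIntegral_compl_ball_norm_Fn_gaussianMonomial_le (I : Fin n → ℕ) {R : ℝ} (hR : 1 ≤ R) :
    ∫ ξ in (ball 0 R)ᶜ, ‖Fn (fun x => gaussianMonomial I x) ξ‖ ≤
      (2 * π) ^ n * (√(gaussianTailBound n R) * √(∏ j, ((I j)! : ℝ))) := by
  have h := setIntegral_compl_ball_abs_multiHermite_mul_gaussianWeight_le I hR
  rw [Fintype.card_fin] at h
  have h_sq : (2 * π) ^ n = √(2 * π) ^ n * √(2 * π) ^ n := by
    rw [← mul_pow, Real.mul_self_sqrt (by positivity)]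
  simp only [norm_Fn_gaussianMonomial]
  rw [integral_const_mul, h_sq, mul_assoc]
  gcongr

/-- The Fourier multiplier operator `f ↦ F⁻¹(m · F f)`, for the normalisation of `Fn`. -/
def fourierMultiplier (m f : EuclideanSpace ℝ (Fin n) → ℂ) (x : EuclideanSpace ℝ (Fin n)) : ℂ :=
  (1 / (2 * π) ^ n) *
    ∫ ξ : EuclideanSpace ℝ (Fin n), m ξ * Fn f ξ * Complex.exp (Complex.I * (⟪x, ξ⟫ : ℝ))

lemma fourierMultiplier_one {f : EuclideanSpace ℝ (Fin n) → ℂ} (hf : Integrable f)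
    (hf_cont : Continuous f) (hF : Integrable (Fn f)) (x : EuclideanSpace ℝ (Fin n)) :
    fourierMultiplier 1 f x = f x := by
  have h_two_pi : 2 * π ≠ 0 := by positivity
  have hF' : Integrable (𝓕 f) := by
    simpa only [Fn_eq_fourier, smul_smul, inv_mul_cancel₀ h_two_pi, one_smul] using!
      hF.comp_smul h_two_pi
  have h_scale := Measure.integral_comp_smul_of_nonneg volume
    (fun ξ : EuclideanSpace ℝ (Fin n) => Fn f ξ * Complex.exp (Complex.I * (⟪x, ξ⟫ : ℝ)))
    (2 * π) (hR := by positivity)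
  rw [finrank_euclideanSpace_fin] at h_scale
  calc fourierMultiplier 1 f x
      = ((2 * π) ^ n)⁻¹ • ∫ ξ, Fn f ξ * Complex.exp (Complex.I * (⟪x, ξ⟫ : ℝ)) := by
        simp [fourierMultiplier]
    _ = ∫ w, Fn f ((2 * π) • w) * Complex.exp (Complex.I * (⟪x, (2 * π) • w⟫ : ℝ)) := h_scale.symm
    _ = 𝓕⁻ (𝓕 f) x := by
        rw [Real.fourierInv_eq']
        congr with w
        rw [Fn_eq_fourier, inv_smul_smul₀ h_two_pi, real_inner_smul_right, smul_eq_mul, mul_comm,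
          real_inner_comm]
        push_cast
        ring_nf
    _ = f x := hf.fourierInv_fourier_eq hF' hf_cont.continuousAt

lemma fourierMultiplier_sub {m₁ m₂ f : EuclideanSpace ℝ (Fin n) → ℂ}
    (h₁ : Integrable fun ξ => m₁ ξ * Fn f ξ) (h₂ : Integrable fun ξ => m₂ ξ * Fn f ξ)
    (x : EuclideanSpace ℝ (Fin n)) :
    fourierMultiplier (m₁ - m₂) f x = fourierMultiplier m₁ f x - fourierMultiplier m₂ f x := by
  have h_mul_exp {g : EuclideanSpace ℝ (Fin n) → ℂ} (hg : Integrable g) :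
      Integrable fun ξ => g ξ * Complex.exp (Complex.I * (⟪x, ξ⟫ : ℝ)) :=
    hg.mul_bdd (c := 1) (by fun_prop) (.of_forall fun ξ => by simp [Complex.norm_exp])
  simp only [fourierMultiplier, Pi.sub_apply, sub_mul]
  rw [integral_sub (h_mul_exp h₁) (h_mul_exp h₂), mul_sub]

lemma norm_fourierMultiplier_le (m f : EuclideanSpace ℝ (Fin n) → ℂ)
    (x : EuclideanSpace ℝ (Fin n)) :
    ‖fourierMultiplier m f x‖ ≤ ((2 * π) ^ n)⁻¹ * ∫ ξ, ‖m ξ‖ * ‖Fn f ξ‖ := by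
  have h_const : ‖(1 / (2 * π) ^ n : ℂ)‖ = ((2 * π) ^ n)⁻¹ := by
    simp [abs_of_pos Real.pi_pos]
  rw [fourierMultiplier, norm_mul, h_const]
  gcongr
  refine (norm_integral_le_integral_norm _).trans_eq (integral_congr_ae (.of_forall fun ξ => ?_))
  simp [Complex.norm_exp]

lemma norm_fourierMultiplier_sub_le {f : EuclideanSpace ℝ (Fin n) → ℂ} (hf : Integrable f)
    (hf_cont : Continuous f) (hF : Integrable (Fn f)) {m : EuclideanSpace ℝ (Fin n) → ℂ}
    (hm : AEStronglyMeasurable m) (hm_sub : ∀ ξ, ‖m ξ - 1‖ ≤ 1)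
    {s : Set (EuclideanSpace ℝ (Fin n))} (hs : MeasurableSet s) (hm_one : ∀ ξ ∉ s, m ξ = 1)
    (x : EuclideanSpace ℝ (Fin n)) :
    ‖fourierMultiplier m f x - f x‖ ≤ ((2 * π) ^ n)⁻¹ * ∫ ξ in s, ‖Fn f ξ‖ := by
  have h_diff : Integrable fun ξ => (m ξ - 1) * Fn f ξ :=
    hF.bdd_mul (hm.sub aestronglyMeasurable_const) (.of_forall hm_sub)
  have h_mul : Integrable fun ξ => m ξ * Fn f ξ :=
    (h_diff.add hF).congr (.of_forall fun ξ => by simp only [Pi.add_apply]; ring)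
  calc ‖fourierMultiplier m f x - f x‖
      = ‖fourierMultiplier (m - 1) f x‖ := by
        rw [fourierMultiplier_sub h_mul (by simpa using! hF), fourierMultiplier_one hf hf_cont hF]
    _ ≤ ((2 * π) ^ n)⁻¹ * ∫ ξ, ‖m ξ - 1‖ * ‖Fn f ξ‖ := norm_fourierMultiplier_le (m - 1) f x
    _ ≤ ((2 * π) ^ n)⁻¹ * ∫ ξ in s, ‖Fn f ξ‖ := by
        rw [← integral_indicator hs]
        refine mul_le_mul_of_nonneg_left (integral_mono_of_nonneg
          (.of_forall fun ξ => mul_nonneg (norm_nonneg _) (norm_nonneg _))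
          (hF.norm.indicator hs) (.of_forall fun ξ => ?_)) (by positivity)
        by_cases hξ : ξ ∈ s
        · simpa only [indicator_of_mem hξ] using
            mul_le_of_le_one_left (norm_nonneg _) (hm_sub ξ)
        · simp [hm_one ξ hξ, hξ]

lemma ofReal_sum_mul_exp_eq_sum_gaussianMonomial (S : Finset (Fin n → ℕ)) (a : (Fin n → ℕ) → ℝ)
    (x : EuclideanSpace ℝ (Fin n)) :
    (((∑ I ∈ S, a I * ∏ j, x j ^ I j) * Real.exp (-‖x‖ ^ 2 / 2) : ℝ) : ℂ) =
      ∑ I ∈ S, (a I : ℂ) * gaussianMonomial I x := by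
  simp only [gaussianMonomial, gaussianWeight, Finset.sum_mul, mul_assoc, Complex.ofReal_sum,
    Complex.ofReal_mul]

lemma norm_ofReal_sub_one_le {t : ℝ} (ht : t ∈ Icc 0 1) : ‖(t : ℂ) - 1‖ ≤ 1 := by
  rw [← Complex.ofReal_one, ← Complex.ofReal_sub, Complex.norm_real, Real.norm_eq_abs, abs_le]
  constructor <;> linarith [ht.1, ht.2]

lemma smul_mem_closedBall_of_mem_ball {E : Type*} [SeminormedAddCommGroup E] [NormedSpace ℝ E]
    {c η : ℝ} (hη : 0 < η) {x : E} (hx : x ∈ ball 0 (c / (2 * η))) :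
    η • x ∈ closedBall (0 : E) (c / 2) := by
  rw [mem_ball_zero_iff, ← div_div, lt_div_iff₀' hη] at hx
  rw [mem_closedBall_zero_iff, norm_smul, Real.norm_of_nonneg hη.le]
  exact hx.le

theorem stmt9_general (S : Finset (Fin n → ℕ)) (a : (Fin n → ℕ) → ℂ) {R : ℝ} (hR : 1 ≤ R)
    {m : EuclideanSpace ℝ (Fin n) → ℂ} (hm : AEStronglyMeasurable m)
    (hm_sub : ∀ ξ, ‖m ξ - 1‖ ≤ 1) (hm_one : ∀ ξ ∈ ball 0 R, m ξ = 1)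
    (x : EuclideanSpace ℝ (Fin n)) :
    ‖fourierMultiplier m (fun y => ∑ I ∈ S, a I * gaussianMonomial I y) x -
        ∑ I ∈ S, a I * gaussianMonomial I x‖ ≤
      √((n / 2 + 1 : ℕ) : ℝ) * R ^ (((n : ℝ) - 2) / 2) * Real.exp (-(1 / 4) * R ^ 2) *
        ∑ I ∈ S, ‖a I‖ * √(∏ j, ((I j)! : ℝ)) := by
  set q : EuclideanSpace ℝ (Fin n) → ℂ := fun y => ∑ I ∈ S, a I * gaussianMonomial I y
  have h_mono (I : Fin n → ℕ) :
      Integrable fun y : EuclideanSpace ℝ (Fin n) => (gaussianMonomial I y : ℂ) :=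
    (integrable_gaussianMonomial I).ofReal
  have hq : Integrable q := integrable_finsetSum _ fun I _ => (h_mono I).const_mul _
  have hFq (ξ : EuclideanSpace ℝ (Fin n)) :
      Fn q ξ = ∑ I ∈ S, a I * Fn (fun y => gaussianMonomial I y) ξ :=
    Fn_sum_const_mul S a (fun I _ => h_mono I) ξ
  have hFq_int : Integrable (Fn q) :=
    (integrable_finsetSum S fun I _ => (integrable_Fn_gaussianMonomial I).const_mul (a I)).congr
      (.of_forall fun ξ => (hFq ξ).symm)
  rw [← sqrt_gaussianTailBound n (zero_le_one.trans hR)]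
  calc ‖fourierMultiplier m q x - q x‖
      ≤ ((2 * π) ^ n)⁻¹ * ∫ ξ in (ball 0 R)ᶜ, ‖Fn q ξ‖ :=
        norm_fourierMultiplier_sub_le hq (by fun_prop) hFq_int hm hm_sub measurableSet_ball.compl
          (fun ξ hξ => hm_one ξ (notMem_compl_iff.1 hξ)) x
    _ ≤ ((2 * π) ^ n)⁻¹ * ∑ I ∈ S, ‖a I‖ *
          ∫ ξ in (ball 0 R)ᶜ, ‖Fn (fun y => gaussianMonomial I y) ξ‖ := by
        simp only [hFq]
        gcongr
        exact integral_norm_sum_const_mul_le S a fun I _ =>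
          (integrable_Fn_gaussianMonomial I).integrableOn
    _ ≤ ((2 * π) ^ n)⁻¹ * ∑ I ∈ S, ‖a I‖ *
          ((2 * π) ^ n * (√(gaussianTailBound n R) * √(∏ j, ((I j)! : ℝ)))) := by
        gcongr with I
        exact setIntegral_compl_ball_norm_Fn_gaussianMonomial_le I hR
    _ = √(gaussianTailBound n R) * ∑ I ∈ S, ‖a I‖ * √(∏ j, ((I j)! : ℝ)) := by
        rw [Finset.mul_sum, Finset.mul_sum]
        refine Finset.sum_congr rfl fun I _ => ?_
        field_simp

end
end

/-- `L^∞` bound on `q^c_η − q` where `q = Q e^{-‖x‖²/2}` for a polynomial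
`Q = Σ_{I ∈ S} a_I x^I` and `q^c_η = F⁻¹(χ̃_c(ηξ) F(q))`. -/
theorem stmt9 (n : ℕ) (hn : 0 < n)
    (S : Finset (Fin n → ℕ)) (a : (Fin n → ℕ) → ℝ)
    (c η : ℝ) (hc : 0 < c) (hη : 0 < η) (hcη : 1 ≤ c / (2 * η))
    (χ : EuclideanSpace ℝ (Fin n) → ℝ) (hχ : ContDiff ℝ (⊤ : ℕ∞) χ)
    (hχ01 : ∀ ξ, χ ξ ∈ Set.Icc (0:ℝ) 1)
    (hχsupp : tsupport χ ⊆ Metric.closedBall 0 c)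
    (hχ1 : ∀ ξ ∈ Metric.closedBall (0 : EuclideanSpace ℝ (Fin n)) (c / 2), χ ξ = 1)
    (Q q : EuclideanSpace ℝ (Fin n) → ℝ)
    (hQ : Q = fun x => ∑ I ∈ S, a I * ∏ j, x j ^ I j)
    (hq : q = fun x => Q x * Real.exp (-‖x‖ ^ 2 / 2))
    (qcη : EuclideanSpace ℝ (Fin n) → ℂ)
    (hqcη : qcη = fun x => (1 / (2 * Real.pi) ^ n) *
      ∫ ξ : EuclideanSpace ℝ (Fin n),
        (χ (η • ξ) : ℂ) * Fn (fun y => (q y : ℂ)) ξ * Complex.exp (Complex.I * (⟪x, ξ⟫ : ℝ))) :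
    ∀ x, ‖qcη x - (q x : ℂ)‖ ≤
      Real.sqrt ((n / 2 + 1 : ℕ) : ℝ) * (c / (2 * η)) ^ (((n : ℝ) - 2) / 2) *
        Real.exp (-(1 / 4) * (c / (2 * η)) ^ 2) *
        ∑ I ∈ S, |a I| * Real.sqrt (∏ j, (Nat.factorial (I j) : ℝ)) := by
  subst hQ hq hqcη
  simpa only [ofReal_sum_mul_exp_eq_sum_gaussianMonomial, fourierMultiplier, Complex.norm_real,
    Real.norm_eq_abs] using stmt9_general S (fun I => a I) hcη (m := fun ξ => χ (η • ξ))
      (by have := hχ.continuous; fun_prop) (fun ξ => norm_ofReal_sub_one_le (hχ01 _))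
      fun ξ hξ => by rw [hχ1 _ (smul_mem_closedBall_of_mem_ball hη hξ), Complex.ofReal_one]

end
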